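/- Let Λ ⊂ ℝ^N be a full-rank lattice with Voronoi region of volume V(Λ), per-dimension second moment P(Λ) = S_x under the uniform distribution, and normalized second moment G(Λ) = P(Λ)/V(Λ)^{2/N}. For the mod-Λ additive noise channel Z = V + E_f mod Λ with noise per-dimension energy S_{e,f}, the capacity C(Λ,f) = (1/N)(log₂ V(Λ) - h(E_f mod Λ)) satisfies C(Λ,f) ≥ (1/2)log₂(S_x/S_{e,f}) - (1/2)log₂(2πe·G(Λ)). -/

import Mathlib

open MeasureTheory
open scoped ENNReal

/-- Differential entropy (in bits) of a density `g` on `ℝ^N`. -/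
noncomputable def diffEntropy {n : ℕ} (g : EuclideanSpace ℝ (Fin n) → ℝ≥0∞) : ℝ :=
  -∫ x, (g x).toReal * Real.logb 2 (g x).toReal

/-! Let `A` be the density `g` folded along `Λ`. As `g` is one of the terms of the sum `A`, we have
`log g ≤ log A`, and as `log A` is `Λ`-invariant its mean under the folded law equals its mean under
the law of `E_f`; hence `h(E_f mod Λ) ≤ h(E_f)`. Gibbs' inequality against the Gaussian of the same
energy bounds `h(E_f)`. The comparison of means needs `log A` to be integrable: folding the weight
`w = exp (-‖·‖)` gives a bounded function, so `w A` is integrable, and `log t ≤ t - 1` at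
`t = w A / g` bounds `log A` above by integrable functions. -/

section Entropy

variable {α : Type*} [MeasurableSpace α] {ν : Measure α} {g : α → ℝ≥0∞}

/-- Differential entropy, in nats, of the density `g` with respect to `ν`, encoded as the mean of
`-log g` under the law `ν.withDensity g`. It is `0` when `log g` is not integrable. -/
noncomputable def natEntropy (ν : Measure α) (g : α → ℝ≥0∞) : ℝ :=
  -∫ x, Real.log (g x).toReal ∂ν.withDensity g

lemma lintegral_ne_top_of_isFiniteMeasure_withDensity (g : α → ℝ≥0∞)
    [IsFiniteMeasure (ν.withDensity g)] : ∫⁻ x, g x ∂ν ≠ ⊤ := by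
  rw [← setLIntegral_univ, ← withDensity_apply g MeasurableSet.univ]
  exact measure_ne_top _ _

lemma ae_lt_top_of_isFiniteMeasure_withDensity [IsFiniteMeasure (ν.withDensity g)]
    (hg : Measurable g) : ∀ᵐ x ∂ν, g x < ⊤ :=
  ae_lt_top hg (lintegral_ne_top_of_isFiniteMeasure_withDensity g)

lemma ae_withDensity_toReal_pos [IsFiniteMeasure (ν.withDensity g)] (hg : Measurable g) :
    ∀ᵐ x ∂ν.withDensity g, 0 < (g x).toReal := by
  rw [ae_withDensity_iff hg]
  filter_upwards [ae_lt_top_of_isFiniteMeasure_withDensity hg] with x hx hx0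
  exact ENNReal.toReal_pos hx0 hx.ne

lemma integrable_log_withDensity_iff [IsFiniteMeasure (ν.withDensity g)] (hg : Measurable g) :
    Integrable (fun x => Real.log (g x).toReal) (ν.withDensity g) ↔
      Integrable (fun x => (g x).toReal * Real.logb 2 (g x).toReal) ν := by
  rw [integrable_withDensity_iff_integrable_smul' hg (ae_lt_top_of_isFiniteMeasure_withDensity hg)]
  simp only [Real.logb, smul_eq_mul, div_eq_mul_inv, ← mul_assoc]
  exact (integrable_mul_const_iff (inv_pos.2 (Real.log_pos one_lt_two)).ne'.isUnit _).symm

lemma integrable_withDensity_div_toReal [IsFiniteMeasure (ν.withDensity g)] (hg : Measurable g)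
    {b : α → ℝ} (hb : Integrable b ν) :
    Integrable (fun x => b x / (g x).toReal) (ν.withDensity g) := by
  rw [integrable_withDensity_iff_integrable_smul' hg (ae_lt_top_of_isFiniteMeasure_withDensity hg)]
  have hg_meas := hg.ennreal_toReal.aestronglyMeasurable (μ := ν)
  refine hb.mono (hg_meas.smul (hb.1.div₀ hg_meas)) (.of_forall fun x => ?_)
  rcases eq_or_ne (g x).toReal 0 with h0 | h0
  · simp [h0]
  · rw [smul_eq_mul, mul_div_cancel₀ _ h0]

lemma integral_withDensity_div_toReal_le [IsFiniteMeasure (ν.withDensity g)] (hg : Measurable g)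
    {b : α → ℝ} (hb : Integrable b ν) (hb0 : 0 ≤ b) :
    ∫ x, b x / (g x).toReal ∂ν.withDensity g ≤ ∫ x, b x ∂ν := by
  have hfin : ∀ᵐ x ∂ν, g x < ⊤ := ae_lt_top_of_isFiniteMeasure_withDensity hg
  rw [integral_withDensity_eq_integral_toReal_smul hg hfin]
  refine integral_mono ((integrable_withDensity_iff_integrable_smul' hg hfin).1
    (integrable_withDensity_div_toReal (ν := ν) hg hb)) hb fun x => ?_
  rcases eq_or_ne (g x).toReal 0 with h0 | h0
  · simpa [h0] using hb0 x
  · rw [smul_eq_mul, mul_div_cancel₀ _ h0]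

lemma natEntropy_indicator {F : Set α} (hF : MeasurableSet F) (g : α → ℝ≥0∞) :
    natEntropy ν (F.indicator g) = natEntropy (ν.restrict F) g := by
  rw [natEntropy, natEntropy, withDensity_indicator hF]
  congr 1
  refine integral_congr_ae <| (withDensity_absolutelyContinuous (ν.restrict F) g).ae_le ?_
  filter_upwards [ae_restrict_mem hF] with x hx
  rw [Set.indicator_of_mem hx]

theorem natEntropy_le_neg_integral_log [IsProbabilityMeasure (ν.withDensity g)] (hg : Measurable g)
    (hlogg : Integrable (fun x => Real.log (g x).toReal) (ν.withDensity g))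
    {b : α → ℝ} (hb0 : ∀ x, 0 < b x) (hb : Integrable b ν) (hb1 : ∫ x, b x ∂ν ≤ 1)
    (hlogb : Integrable (fun x => Real.log (b x)) (ν.withDensity g)) :
    natEntropy ν g ≤ -∫ x, Real.log (b x) ∂ν.withDensity g := by
  have hratio := integrable_withDensity_div_toReal hg hb
  have hlog_ratio : ∀ᵐ x ∂ν.withDensity g,
      Real.log (b x) - Real.log (g x).toReal ≤ b x / (g x).toReal - 1 := by
    filter_upwards [ae_withDensity_toReal_pos hg] with x hx
    rw [← Real.log_div (hb0 x).ne' hx.ne']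
    exact Real.log_le_sub_one_of_pos (div_pos (hb0 x) hx)
  have hint := integral_mono_ae (hlogb.sub hlogg) (hratio.sub (integrable_const 1)) hlog_ratio
  rw [integral_sub' hlogb hlogg, integral_sub' hratio (integrable_const 1)] at hint
  have hratio_le := integral_withDensity_div_toReal_le hg hb fun x => (hb0 x).le
  simp only [integral_const, probReal_univ, smul_eq_mul, one_mul] at hint
  rw [natEntropy]
  linarith

theorem natEntropy_le_log_measureReal_univ [IsFiniteMeasure ν]
    [IsProbabilityMeasure (ν.withDensity g)] (hg : Measurable g)
    (hlogg : Integrable (fun x => Real.log (g x).toReal) (ν.withDensity g)) :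
    natEntropy ν g ≤ Real.log (ν.real Set.univ) := by
  have hν : ν ≠ 0 := by
    rintro rfl
    exact IsProbabilityMeasure.ne_zero ((0 : Measure α).withDensity g) (withDensity_zero_left g)
  have : NeZero ν := ⟨hν⟩
  have hV : 0 < ν.real Set.univ := measureReal_univ_pos
  simpa using natEntropy_le_neg_integral_log hg hlogg (b := fun _ => (ν.real Set.univ)⁻¹)
    (fun _ => inv_pos.2 hV) (integrable_const _) (by simp [hV.ne']) (integrable_const _)

end Entropy

section Gaussian

variable {E : Type*} [NormedAddCommGroup E] [InnerProductSpace ℝ E] [FiniteDimensional ℝ E]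
  [MeasurableSpace E] [BorelSpace E]

lemma integral_exp_neg_one_div_two_mul_mul_norm_sq {S : ℝ} (hS : 0 < S) :
    ∫ x : E, Real.exp (-(1 / (2 * S)) * ‖x‖ ^ 2) =
      (2 * Real.pi * S) ^ (Module.finrank ℝ E / 2 : ℝ) := by
  rw [GaussianFourier.integral_rexp_neg_mul_sq_norm (by positivity)]
  congr 1
  field_simp

theorem natEntropy_volume_le_gaussian {g : E → ℝ≥0∞}
    [IsProbabilityMeasure (volume.withDensity g)] (hg : Measurable g)
    (hlogg : Integrable (fun x => Real.log (g x).toReal) (volume.withDensity g))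
    (hmom : Integrable (fun x => ‖x‖ ^ 2) (volume.withDensity g)) {S : ℝ} (hS : 0 < S)
    (hS_le : ∫ x, ‖x‖ ^ 2 ∂volume.withDensity g ≤ Module.finrank ℝ E * S) :
    natEntropy volume g ≤
      Module.finrank ℝ E / 2 * Real.log (2 * Real.pi * Real.exp 1 * S) := by
  set d : ℝ := (Module.finrank ℝ E : ℝ)
  set Z : ℝ := (2 * Real.pi * S) ^ (d / 2) with hZ
  have hZ0 : 0 < Z := by positivity
  have hgauss : ∫ x : E, Real.exp (-(1 / (2 * S)) * ‖x‖ ^ 2) = Z :=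
    integral_exp_neg_one_div_two_mul_mul_norm_sq hS
  have hgauss_int : Integrable fun x : E => Real.exp (-(1 / (2 * S)) * ‖x‖ ^ 2) :=
    .of_integral_ne_zero (hgauss ▸ hZ0.ne')
  have hlog : ∀ x : E, Real.log (Z⁻¹ * Real.exp (-(1 / (2 * S)) * ‖x‖ ^ 2)) =
      -Real.log Z - 1 / (2 * S) * ‖x‖ ^ 2 := fun x => by
    rw [Real.log_mul (inv_ne_zero hZ0.ne') (Real.exp_ne_zero _), Real.log_exp, Real.log_inv]
    ring
  have hlog_int : Integrable (fun x : E => -Real.log Z - 1 / (2 * S) * ‖x‖ ^ 2)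
      (volume.withDensity g) := (integrable_const _).sub (hmom.const_mul _)
  calc natEntropy volume g
      ≤ -∫ x, Real.log (Z⁻¹ * Real.exp (-(1 / (2 * S)) * ‖x‖ ^ 2)) ∂volume.withDensity g :=
        natEntropy_le_neg_integral_log hg hlogg (fun x => by positivity)
          (hgauss_int.const_mul _) (by rw [integral_const_mul, hgauss, inv_mul_cancel₀ hZ0.ne'])
          (by simpa only [hlog] using hlog_int)
    _ = Real.log Z + 1 / (2 * S) * ∫ x, ‖x‖ ^ 2 ∂volume.withDensity g := by
        simp only [hlog]
        rw [integral_sub (integrable_const _) (hmom.const_mul _), integral_const_mul]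
        simp only [integral_const, probReal_univ, smul_eq_mul, one_mul]
        ring
    _ ≤ Real.log Z + 1 / (2 * S) * (d * S) := by gcongr
    _ = d / 2 * Real.log (2 * Real.pi * Real.exp 1 * S) := by
        rw [hZ, Real.log_rpow (by positivity), mul_right_comm (2 * Real.pi),
          Real.log_mul (by positivity) (Real.exp_ne_zero _), Real.log_exp]
        field_simp

end Gaussian

section Periodization

variable {Γ α : Type*} [AddGroup Γ] [AddAction Γ α]

variable (Γ) in
/-- The sum of `g` over the orbits of `Γ`. For the density `g` of a random vector and `Γ` a lattice,
its restriction to a fundamental domain is the density of that vector modulo `Γ`. -/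
noncomputable def periodization (g : α → ℝ≥0∞) (x : α) : ℝ≥0∞ := ∑' γ : Γ, g (γ +ᵥ x)

lemma periodization_vadd (g : α → ℝ≥0∞) (γ : Γ) (x : α) :
    periodization Γ g (γ +ᵥ x) = periodization Γ g x := by
  simp only [periodization, vadd_vadd]
  exact (Equiv.addRight γ).tsum_eq fun γ' => g (γ' +ᵥ x)

lemma le_periodization (g : α → ℝ≥0∞) (x : α) : g x ≤ periodization Γ g x := by
  simpa only [periodization, zero_vadd] using ENNReal.le_tsum (f := fun γ : Γ => g (γ +ᵥ x)) 0

variable [Countable Γ] [MeasurableSpace α] [MeasurableConstVAdd Γ α]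

lemma measurable_periodization {g : α → ℝ≥0∞} (hg : Measurable g) :
    Measurable (periodization Γ g) :=
  Measurable.tsum fun γ => hg.comp (measurable_const_vadd γ)

variable {ν : Measure α} [VAddInvariantMeasure Γ α ν] {F : Set α} {g : α → ℝ≥0∞}

lemma setLIntegral_periodization (hF : IsAddFundamentalDomain Γ F ν) (hg : Measurable g) :
    ∫⁻ x in F, periodization Γ g x ∂ν = ∫⁻ x, g x ∂ν := by
  rw [hF.lintegral_eq_tsum'']
  exact lintegral_tsum fun γ => (hg.comp (measurable_const_vadd γ)).aemeasurable

lemma setLIntegral_periodization_mul (hF : IsAddFundamentalDomain Γ F ν) (hg : Measurable g)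
    {u : α → ℝ≥0∞} (hu : Measurable u) (hu_inv : ∀ (γ : Γ) x, u (γ +ᵥ x) = u x) :
    ∫⁻ x in F, periodization Γ g x * u x ∂ν = ∫⁻ x, g x * u x ∂ν := by
  have hfold := setLIntegral_periodization (g := fun x => g x * u x) hF (hg.mul hu)
  simpa only [periodization, hu_inv, ENNReal.tsum_mul_right] using hfold

lemma lintegral_withDensity_periodization (hF : IsAddFundamentalDomain Γ F ν) (hg : Measurable g)
    {u : α → ℝ≥0∞} (hu : Measurable u) (hu_inv : ∀ (γ : Γ) x, u (γ +ᵥ x) = u x) :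
    ∫⁻ x, u x ∂(ν.restrict F).withDensity (periodization Γ g) = ∫⁻ x, u x ∂ν.withDensity g := by
  rw [lintegral_withDensity_eq_lintegral_mul _ (measurable_periodization hg) hu,
    lintegral_withDensity_eq_lintegral_mul _ hg hu]
  exact setLIntegral_periodization_mul hF hg hu hu_inv

lemma integrable_withDensity_periodization_iff (hF : IsAddFundamentalDomain Γ F ν)
    (hg : Measurable g) {v : α → ℝ} (hv : Measurable v) (hv_inv : ∀ (γ : Γ) x, v (γ +ᵥ x) = v x) :
    Integrable v ((ν.restrict F).withDensity (periodization Γ g)) ↔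
      Integrable v (ν.withDensity g) := by
  simp only [Integrable, hv.aestronglyMeasurable, true_and, HasFiniteIntegral]
  rw [lintegral_withDensity_periodization hF hg hv.enorm fun γ x => by rw [hv_inv]]

lemma integral_withDensity_periodization (hF : IsAddFundamentalDomain Γ F ν)
    (hg : Measurable g) {v : α → ℝ} (hv : Measurable v) (hv_inv : ∀ (γ : Γ) x, v (γ +ᵥ x) = v x)
    (hv_int : Integrable v (ν.withDensity g)) :
    ∫ x, v x ∂(ν.restrict F).withDensity (periodization Γ g) = ∫ x, v x ∂ν.withDensity g := by
  rw [integral_eq_lintegral_pos_part_sub_lintegral_neg_part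
      ((integrable_withDensity_periodization_iff hF hg hv hv_inv).2 hv_int),
    integral_eq_lintegral_pos_part_sub_lintegral_neg_part hv_int,
    lintegral_withDensity_periodization hF hg hv.ennreal_ofReal fun γ x => by rw [hv_inv],
    lintegral_withDensity_periodization hF hg (u := fun x => ENNReal.ofReal (-v x))
      hv.neg.ennreal_ofReal fun γ x => by rw [hv_inv]]

lemma isProbabilityMeasure_withDensity_periodization [IsProbabilityMeasure (ν.withDensity g)]
    (hF : IsAddFundamentalDomain Γ F ν) (hg : Measurable g) :
    IsProbabilityMeasure ((ν.restrict F).withDensity (periodization Γ g)) := by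
  constructor
  rw [← lintegral_one, lintegral_withDensity_periodization hF hg measurable_const fun _ _ => rfl]
  simp

lemma ae_periodization_lt_top [IsFiniteMeasure (ν.withDensity g)]
    (hF : IsAddFundamentalDomain Γ F ν) (hg : Measurable g) :
    ∀ᵐ x ∂ν, periodization Γ g x < ⊤ := by
  have hA := measurable_periodization (Γ := Γ) hg
  refine hF.measure_zero_of_invariant _ (fun γ => ?_) ?_
  · ext x
    simp only [Set.mem_vadd_set_iff_neg_vadd_mem, Set.mem_compl_iff, Set.mem_ofPred_eq,
      periodization_vadd]
  · rw [← Measure.restrict_apply (measurableSet_lt hA measurable_const).compl]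
    refine ae_lt_top hA ?_
    rw [setLIntegral_periodization hF hg]
    exact lintegral_ne_top_of_isFiniteMeasure_withDensity g

lemma lintegral_mul_periodization_le (hF : IsAddFundamentalDomain Γ F ν) (hg : Measurable g)
    {w : α → ℝ≥0∞} (hw : Measurable w) {M : ℝ≥0∞} (hM : ∀ x, periodization Γ w x ≤ M) :
    ∫⁻ x, w x * periodization Γ g x ∂ν ≤ M * ∫⁻ x, g x ∂ν := by
  have hA := measurable_periodization (Γ := Γ) hg
  calc ∫⁻ x, w x * periodization Γ g x ∂ν
      = ∫⁻ x in F, periodization Γ w x * periodization Γ g x ∂ν :=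
        (setLIntegral_periodization_mul hF hw hA fun γ x => periodization_vadd g γ x).symm
    _ ≤ ∫⁻ x in F, M * periodization Γ g x ∂ν := by gcongr; exact hM _
    _ = M * ∫⁻ x, g x ∂ν := by
        rw [lintegral_const_mul _ hA, setLIntegral_periodization hF hg]

lemma integrable_mul_toReal_periodization [IsFiniteMeasure (ν.withDensity g)]
    (hF : IsAddFundamentalDomain Γ F ν) (hg : Measurable g) {w : α → ℝ} (hw : Measurable w)
    {M : ℝ≥0∞} (hM_top : M ≠ ⊤) (hM : ∀ x, periodization Γ (fun y => ‖w y‖ₑ) x ≤ M) :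
    Integrable (fun x => w x * (periodization Γ g x).toReal) ν := by
  have hA := measurable_periodization (Γ := Γ) hg
  refine ⟨(hw.mul hA.ennreal_toReal).aestronglyMeasurable, ?_⟩
  calc ∫⁻ x, ‖w x * (periodization Γ g x).toReal‖ₑ ∂ν
      ≤ ∫⁻ x, ‖w x‖ₑ * periodization Γ g x ∂ν := by
        gcongr with x
        rw [enorm_mul, Real.enorm_of_nonneg ENNReal.toReal_nonneg]
        gcongr
        exact ENNReal.ofReal_toReal_le
    _ ≤ M * ∫⁻ x, g x ∂ν := lintegral_mul_periodization_le hF hg hw.enorm hM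
    _ < ⊤ := (ENNReal.mul_ne_top hM_top (lintegral_ne_top_of_isFiniteMeasure_withDensity g)).lt_top

lemma log_toReal_le_log_toReal_periodization [IsFiniteMeasure (ν.withDensity g)]
    (hF : IsAddFundamentalDomain Γ F ν) (hg : Measurable g) :
    ∀ᵐ x ∂ν.withDensity g,
      Real.log (g x).toReal ≤ Real.log (periodization Γ g x).toReal := by
  filter_upwards [ae_withDensity_toReal_pos hg,
    (withDensity_absolutelyContinuous ν g).ae_le (ae_periodization_lt_top hF hg)] with x hgx hAx
  exact Real.log_le_log hgx (ENNReal.toReal_mono hAx.ne (le_periodization g x))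

lemma integrable_log_periodization [IsFiniteMeasure (ν.withDensity g)]
    (hF : IsAddFundamentalDomain Γ F ν) (hg : Measurable g)
    (hlogg : Integrable (fun x => Real.log (g x).toReal) (ν.withDensity g))
    {w : α → ℝ} (hw : Measurable w) (hw0 : ∀ x, 0 < w x)
    (hlogw : Integrable (fun x => Real.log (w x)) (ν.withDensity g)) {M : ℝ≥0∞} (hM_top : M ≠ ⊤)
    (hM : ∀ x, periodization Γ (fun y => ‖w y‖ₑ) x ≤ M) :
    Integrable (fun x => Real.log (periodization Γ g x).toReal) (ν.withDensity g) := by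
  have hratio := integrable_withDensity_div_toReal hg
    (integrable_mul_toReal_periodization hF hg hw hM_top hM)
  have hupper : ∀ᵐ x ∂ν.withDensity g, Real.log (periodization Γ g x).toReal ≤
      Real.log (g x).toReal - Real.log (w x) +
        w x * (periodization Γ g x).toReal / (g x).toReal := by
    filter_upwards [ae_withDensity_toReal_pos hg,
      (withDensity_absolutelyContinuous ν g).ae_le (ae_periodization_lt_top hF hg)] with x hgx hAx
    have hAx_pos := hgx.trans_le (ENNReal.toReal_mono hAx.ne (le_periodization g x))
    have hlog := Real.log_le_sub_one_of_pos (div_pos (mul_pos (hw0 x) hAx_pos) hgx)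
    rw [Real.log_div (mul_pos (hw0 x) hAx_pos).ne' hgx.ne',
      Real.log_mul (hw0 x).ne' hAx_pos.ne'] at hlog
    linarith
  exact integrable_of_le_of_le
    (measurable_periodization hg).ennreal_toReal.log.aestronglyMeasurable
    (log_toReal_le_log_toReal_periodization hF hg) hupper hlogg ((hlogg.sub hlogw).add hratio)

theorem natEntropy_periodization_le [IsFiniteMeasure (ν.withDensity g)]
    (hF : IsAddFundamentalDomain Γ F ν) (hg : Measurable g)
    (hlogg : Integrable (fun x => Real.log (g x).toReal) (ν.withDensity g))
    (hlogA : Integrable (fun x => Real.log (periodization Γ g x).toReal) (ν.withDensity g)) :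
    natEntropy (ν.restrict F) (periodization Γ g) ≤ natEntropy ν g := by
  rw [natEntropy, natEntropy, integral_withDensity_periodization hF hg
    (measurable_periodization hg).ennreal_toReal.log (fun γ x => by rw [periodization_vadd]) hlogA]
  exact neg_le_neg <| integral_mono_ae hlogg hlogA <| log_toReal_le_log_toReal_periodization hF hg

theorem natEntropy_periodization_le_log_measureReal [IsProbabilityMeasure (ν.withDensity g)]
    (hF : IsAddFundamentalDomain Γ F ν) (hF_fin : ν F ≠ ⊤) (hg : Measurable g)
    (hlogA : Integrable (fun x => Real.log (periodization Γ g x).toReal) (ν.withDensity g)) :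
    natEntropy (ν.restrict F) (periodization Γ g) ≤ Real.log (ν.real F) := by
  have : IsFiniteMeasure (ν.restrict F) := isFiniteMeasure_restrict.2 hF_fin
  have := isProbabilityMeasure_withDensity_periodization hF hg
  have hA := measurable_periodization (Γ := Γ) hg
  rw [← integrable_withDensity_periodization_iff hF hg hA.ennreal_toReal.log
    fun γ x => by rw [periodization_vadd]] at hlogA
  simpa using natEntropy_le_log_measureReal_univ hA hlogA

end Periodization

section Lattice

variable {E : Type*}

lemma eq_indicator_periodization [AddCommGroup E] {Λ : AddSubgroup E} {F : Set E}
    {g g' : E → ℝ≥0∞} (hper : ∀ x ∈ F, g' x = ∑' l : Λ, g (x + l)) (hsupp : ∀ x ∉ F, g' x = 0) :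
    g' = F.indicator (periodization Λ g) := by
  ext x
  by_cases hx : x ∈ F
  · simp [hx, hper, periodization, AddSubgroup.vadd_def, add_comm]
  · simp [hx, hsupp]

lemma isAddFundamentalDomain_of_existsUnique_add [AddGroup E] [MeasurableSpace E] {ν : Measure E}
    {Λ : AddSubgroup E} {F : Set E} (hF : MeasurableSet F)
    (hfund : ∀ x, ∃! p : E × E, p.1 ∈ Λ ∧ p.2 ∈ F ∧ x = p.1 + p.2) :
    IsAddFundamentalDomain Λ F ν := by
  refine .mk' hF.nullMeasurableSet fun x => ?_
  obtain ⟨⟨l, y⟩, ⟨hl, hy, hx⟩, huniq⟩ := hfund x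
  refine ⟨⟨-l, Λ.neg_mem hl⟩, ?_, fun l' hl'F => ?_⟩
  · simpa [AddSubgroup.vadd_def, hx] using hy
  · have hpair := huniq (-l', l' +ᵥ x) ⟨Λ.neg_mem l'.2, hl'F, by simp [AddSubgroup.vadd_def]⟩
    have hneg : -(l' : E) = l := congrArg Prod.fst hpair
    exact Subtype.ext (neg_eq_iff_eq_neg.1 hneg)

variable [NormedAddCommGroup E]

lemma exists_forall_norm_vadd_le [ProperSpace E] (Λ : AddSubgroup E) [DiscreteTopology Λ] (x : E) :
    ∃ l₀ : Λ, ∀ l : Λ, ‖l₀ +ᵥ x‖ ≤ ‖l +ᵥ x‖ := by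
  have hΛ : IsClosed (Λ : Set E) := AddSubgroup.isClosed_of_discrete
  obtain ⟨y, hy, hdist⟩ := hΛ.exists_infDist_eq_dist ⟨0, Λ.zero_mem⟩ (-x)
  have hnorm : ∀ l : E, ‖l + x‖ = dist (-x) l := fun l => by
    rw [dist_eq_norm, ← norm_neg]; congr 1; abel
  refine ⟨⟨y, hy⟩, fun l => ?_⟩
  simp only [AddSubgroup.vadd_def, vadd_eq_add, hnorm]
  exact hdist ▸ Metric.infDist_le_dist_of_mem l.2

variable [NormedSpace ℝ E] [FiniteDimensional ℝ E] (Λ : AddSubgroup E) [DiscreteTopology Λ]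

lemma summable_exp_neg_norm_div_two : Summable fun l : Λ => Real.exp (-(‖l‖ / 2)) := by
  have : DiscreteTopology (AddSubgroup.toIntSubmodule Λ) := ‹DiscreteTopology Λ›
  set k := Module.finrank ℤ (AddSubgroup.toIntSubmodule Λ) + 1
  have hpow : Summable fun l : Λ => ‖l‖⁻¹ ^ k :=
    ZLattice.summable_norm_pow_inv (AddSubgroup.toIntSubmodule Λ) k (Nat.lt_succ_self _)
  refine Summable.of_norm_bounded_eventually (hpow.mul_left (2 ^ k * k.factorial : ℝ)) ?_
  filter_upwards [(Set.finite_singleton (0 : Λ)).compl_mem_cofinite] with l hl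
  have hl_pos : 0 < ‖l‖ := norm_pos_iff.2 hl
  have hexp := inv_anti₀ (by positivity) (Real.pow_div_factorial_le_exp (‖l‖ / 2) (by positivity) k)
  rw [Real.norm_of_nonneg (Real.exp_pos _).le, Real.exp_neg]
  refine hexp.trans_eq ?_
  rw [inv_div, div_pow, inv_pow]
  field_simp

lemma exists_periodization_exp_neg_norm_le :
    ∃ M : ℝ≥0∞, M ≠ ⊤ ∧ ∀ x, periodization Λ (fun y : E => ‖Real.exp (-‖y‖)‖ₑ) x ≤ M := by
  refine ⟨∑' l : Λ, ENNReal.ofReal (Real.exp (-(‖l‖ / 2))),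
    (summable_exp_neg_norm_div_two Λ).tsum_ofReal_ne_top, fun x => ?_⟩
  obtain ⟨l₀, hl₀⟩ := exists_forall_norm_vadd_le Λ x
  -- Translating `x` to a shortest vector `y` of its coset gives `‖l‖ ≤ 2 ‖l + y‖` for all `l ∈ Λ`.
  rw [← periodization_vadd _ l₀]
  refine ENNReal.tsum_le_tsum fun l => ?_
  beta_reduce
  rw [Real.enorm_of_nonneg (Real.exp_pos _).le]
  gcongr
  have hmin : ‖l₀ +ᵥ x‖ ≤ ‖l +ᵥ l₀ +ᵥ x‖ := by simpa only [vadd_vadd] using hl₀ (l + l₀)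
  have htri : ‖l‖ ≤ ‖l +ᵥ l₀ +ᵥ x‖ + ‖l₀ +ᵥ x‖ := by
    simpa [AddSubgroup.vadd_def] using norm_sub_le (l + (l₀ +ᵥ x) : E) (l₀ +ᵥ x)
  linarith

variable {Λ} [Countable Λ] [MeasurableSpace E] [BorelSpace E]

lemma integrable_log_periodization_of_integrable_norm {ν : Measure E} [VAddInvariantMeasure Λ E ν]
    {F : Set E} {g : E → ℝ≥0∞} [IsFiniteMeasure (ν.withDensity g)]
    (hF : IsAddFundamentalDomain Λ F ν) (hg : Measurable g)
    (hlogg : Integrable (fun x => Real.log (g x).toReal) (ν.withDensity g))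
    (hnorm : Integrable (fun x => ‖x‖) (ν.withDensity g)) :
    Integrable (fun x => Real.log (periodization Λ g x).toReal) (ν.withDensity g) := by
  obtain ⟨M, hM_top, hM⟩ := exists_periodization_exp_neg_norm_le Λ
  exact integrable_log_periodization hF hg hlogg (w := fun y => Real.exp (-‖y‖)) (by fun_prop)
    (fun _ => Real.exp_pos _) (by simpa only [Real.log_exp] using hnorm.fun_neg) hM_top hM

end Lattice

section Moments

variable {E : Type*} [NormedAddCommGroup E] [MeasurableSpace E] {P : Measure E}

lemma integral_norm_sq_pos [NeZero P] [NullSingletonClass P]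
    (hsq : Integrable (fun x => ‖x‖ ^ 2) P) : 0 < ∫ x, ‖x‖ ^ 2 ∂P := by
  rw [integral_pos_iff_support_of_nonneg (fun x => by positivity) hsq]
  have hsupp : Function.support (fun x : E => ‖x‖ ^ 2) = Set.univ \ {0} := by ext; simp
  rw [hsupp, measure_sdiff_null (measure_singleton 0)]
  exact NeZero.pos _

lemma integrable_norm_of_integrable_norm_sq [OpensMeasurableSpace E]
    [SecondCountableTopology E] [IsFiniteMeasure P] (hsq : Integrable (fun x => ‖x‖ ^ 2) P) :
    Integrable (fun x => ‖x‖) P :=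
  ((memLp_two_iff_integrable_sq_norm aestronglyMeasurable_id).2 hsq).integrable one_le_two |>.norm

end Moments

lemma diffEntropy_eq_natEntropy_div_log_two {n : ℕ} {g : EuclideanSpace ℝ (Fin n) → ℝ≥0∞}
    [IsFiniteMeasure (volume.withDensity g)] (hg : Measurable g) :
    diffEntropy g = natEntropy volume g / Real.log 2 := by
  rw [diffEntropy, natEntropy, integral_withDensity_eq_integral_toReal_smul hg
    (ae_lt_top_of_isFiniteMeasure_withDensity hg), neg_div, ← integral_div]
  simp only [Real.logb, smul_eq_mul, mul_div_assoc]

lemma diffEntropy_indicator {n : ℕ} {F : Set (EuclideanSpace ℝ (Fin n))} (hF : MeasurableSet F)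
    {g : EuclideanSpace ℝ (Fin n) → ℝ≥0∞} (hg : Measurable g)
    [IsFiniteMeasure ((volume.restrict F).withDensity g)] :
    diffEntropy (F.indicator g) = natEntropy (volume.restrict F) g / Real.log 2 := by
  have : IsFiniteMeasure (volume.withDensity (F.indicator g)) := by
    rwa [withDensity_indicator hF]
  rw [diffEntropy_eq_natEntropy_div_log_two (hg.indicator hF), natEntropy_indicator hF]

lemma half_logb_div_sub_half_logb_mul {n b c S T V : ℝ} (hn : n ≠ 0) (hc : c ≠ 0) (hS : S ≠ 0)
    (hT : T ≠ 0) (hV : 0 < V) :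
    1 / 2 * Real.logb b (S / T) - 1 / 2 * Real.logb b (c * (S / V ^ (2 / n))) =
      1 / n * (Real.logb b V - n / 2 * Real.logb b (c * T)) := by
  have hVn : V ^ (2 / n) ≠ 0 := (Real.rpow_pos_of_pos hV _).ne'
  rw [Real.logb_div hS hT, Real.logb_mul hc (div_ne_zero hS hVn), Real.logb_div hS hVn,
    Real.logb_rpow_eq_mul_logb_of_pos hV, Real.logb_mul hc hT]
  field_simp
  ring

lemma half_logb_div_sub_half_logb_mul_le {n b c h S T V : ℝ} (hn : 0 < n) (hc : c ≠ 0) (hT : T ≠ 0)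
    (hV : 0 < V) (hh_vol : h ≤ Real.logb b V) (hh_gauss : h ≤ n / 2 * Real.logb b (c * T)) :
    1 / 2 * Real.logb b (S / T) - 1 / 2 * Real.logb b (c * (S / V ^ (2 / n))) ≤
      1 / n * (Real.logb b V - h) := by
  rcases eq_or_ne S 0 with rfl | hS
  -- `S = 0` occurs as the junk value of an infinite second moment.
  · rw [zero_div, zero_div, mul_zero, Real.logb_zero, mul_zero, sub_zero]
    exact mul_nonneg (one_div_pos.2 hn).le (sub_nonneg.2 hh_vol)
  · rw [half_logb_div_sub_half_logb_mul hn.ne' hc hS hT hV]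
    gcongr

section ModLattice

variable {n : ℕ} {Λ : AddSubgroup (EuclideanSpace ℝ (Fin n))} [Countable Λ]
  {F : Set (EuclideanSpace ℝ (Fin n))} {g : EuclideanSpace ℝ (Fin n) → ℝ≥0∞}
  [IsProbabilityMeasure (volume.withDensity g)]

lemma diffEntropy_indicator_periodization_le_logb_measureReal (hF : MeasurableSet F)
    (hfd : IsAddFundamentalDomain Λ F volume) (hF_fin : volume F ≠ ⊤) (hg : Measurable g)
    (hlogA : Integrable (fun x => Real.log (periodization Λ g x).toReal) (volume.withDensity g)) :
    diffEntropy (F.indicator (periodization Λ g)) ≤ Real.logb 2 (volume.real F) := by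
  have := isProbabilityMeasure_withDensity_periodization hfd hg
  rw [diffEntropy_indicator hF (measurable_periodization hg), Real.logb]
  gcongr
  exact natEntropy_periodization_le_log_measureReal hfd hF_fin hg hlogA

lemma diffEntropy_indicator_periodization_le_gaussian (hF : MeasurableSet F)
    (hfd : IsAddFundamentalDomain Λ F volume) (hg : Measurable g)
    (hlogg : Integrable (fun x => Real.log (g x).toReal) (volume.withDensity g))
    (hlogA : Integrable (fun x => Real.log (periodization Λ g x).toReal) (volume.withDensity g))
    (hsq : Integrable (fun x => ‖x‖ ^ 2) (volume.withDensity g)) {S : ℝ} (hS : 0 < S)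
    (hS_le : ∫ x, ‖x‖ ^ 2 ∂volume.withDensity g ≤ n * S) :
    diffEntropy (F.indicator (periodization Λ g)) ≤
      n / 2 * Real.logb 2 (2 * Real.pi * Real.exp 1 * S) := by
  have := isProbabilityMeasure_withDensity_periodization hfd hg
  have hgauss := natEntropy_volume_le_gaussian hg hlogg hsq hS (by rwa [finrank_euclideanSpace_fin])
  rw [diffEntropy_indicator hF (measurable_periodization hg), Real.logb, ← mul_div_assoc]
  gcongr
  rw [finrank_euclideanSpace_fin] at hgauss
  exact (natEntropy_periodization_le hfd hg hlogg hlogA).trans hgauss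

end ModLattice

/-- **Mod-Λ channel capacity lower bound.** For the mod-Λ additive noise channel
`Z = V + E_f mod Λ`, with `V(Λ)` the covolume, `Sₓ = P(Λ)` the per-dimension second
moment of the Voronoi (fundamental) region, `G(Λ) = Sₓ/V(Λ)^{2/N}` the normalized second
moment, and `S_{e,f}` the per-dimension energy of the noise `E_f`, the capacity
`C(Λ,f) = (1/N)(log₂ V(Λ) - h(E_f mod Λ))` satisfies
`C(Λ,f) ≥ (1/2)log₂(Sₓ/S_{e,f}) - (1/2)log₂(2πe·G(Λ))`. -/
theorem mod_lattice_capacity_lower_bound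
    {Ω : Type*} [MeasurableSpace Ω] (μ : Measure Ω) [IsProbabilityMeasure μ]
    (n : ℕ) (hn : 0 < n) (Λ : AddSubgroup (EuclideanSpace ℝ (Fin n)))
    [DiscreteTopology Λ]
    (hspan : Submodule.span ℝ (Λ : Set (EuclideanSpace ℝ (Fin n))) = ⊤)
    (F : Set (EuclideanSpace ℝ (Fin n))) (hF : MeasurableSet F)
    (hfund : ∀ x : EuclideanSpace ℝ (Fin n),
      ∃! p : EuclideanSpace ℝ (Fin n) × EuclideanSpace ℝ (Fin n),
        p.1 ∈ Λ ∧ p.2 ∈ F ∧ x = p.1 + p.2)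
    (hvol : 0 < volume F) (hvol' : volume F < ⊤)
    (VΛ Sx G : ℝ) (hVΛ : VΛ = (volume F).toReal)
    (hSx : Sx = (1 / ((n : ℝ) * VΛ)) * ∫ x in F, ‖x‖ ^ 2)
    (hG : G = Sx / VΛ ^ ((2 : ℝ) / n))
    (Ef : Ω → EuclideanSpace ℝ (Fin n)) (hEf : Measurable Ef)
    (g g' : EuclideanSpace ℝ (Fin n) → ℝ≥0∞) (hg : Measurable g) (hg' : Measurable g')
    (hlaw : Measure.map Ef μ = volume.withDensity g)
    (hper : ∀ x ∈ F, g' x = ∑' l : Λ, g (x + (l : EuclideanSpace ℝ (Fin n))))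
    (hsupp : ∀ x ∉ F, g' x = 0)
    (hint : Integrable (fun x => (g x).toReal * Real.logb 2 (g x).toReal))
    (Sef : ℝ) (hSef : Sef = (1 / (n : ℝ)) * ∫ ω, ‖Ef ω‖ ^ 2 ∂μ)
    (hmom : Integrable (fun ω => ‖Ef ω‖ ^ 2) μ) :
    (1 / (n : ℝ)) * (Real.logb 2 VΛ - diffEntropy g') ≥
      (1 / 2) * Real.logb 2 (Sx / Sef) -
        (1 / 2) * Real.logb 2 (2 * Real.pi * Real.exp 1 * G) := by
  have : Nonempty (Fin n) := ⟨⟨0, hn⟩⟩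
  have : Countable Λ := TopologicalSpace.separableSpace_iff_countable.mp inferInstance
  have : IsProbabilityMeasure (volume.withDensity g) :=
    hlaw ▸ Measure.isProbabilityMeasure_map hEf.aemeasurable
  have hfd : IsAddFundamentalDomain Λ F volume :=
    isAddFundamentalDomain_of_existsUnique_add hF hfund
  have hlogg := (integrable_log_withDensity_iff hg).2 hint
  have hsq : Integrable (fun x => ‖x‖ ^ 2) (volume.withDensity g) :=
    hlaw ▸ (integrable_map_measure (by fun_prop) hEf.aemeasurable).2 hmom
  have henergy : ∫ x, ‖x‖ ^ 2 ∂volume.withDensity g = n * Sef := by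
    rw [← hlaw, integral_map hEf.aemeasurable (by fun_prop), hSef]
    field_simp
  have hSef_pos := pos_of_mul_pos_right (henergy ▸ integral_norm_sq_pos hsq) n.cast_nonneg
  have hlogA := integrable_log_periodization_of_integrable_norm hfd hg hlogg
    (integrable_norm_of_integrable_norm_sq hsq)
  obtain rfl := eq_indicator_periodization hper hsupp
  rw [ge_iff_le, hG]
  refine half_logb_div_sub_half_logb_mul_le (Nat.cast_pos.2 hn) (by positivity) hSef_pos.ne'
    (hVΛ ▸ ENNReal.toReal_pos hvol.ne' hvol'.ne) ?_ ?_
  · rw [hVΛ]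
    exact diffEntropy_indicator_periodization_le_logb_measureReal hF hfd hvol'.ne hg hlogA
  · exact diffEntropy_indicator_periodization_le_gaussian hF hfd hg hlogg hlogA hsq hSef_pos
      henergy.le
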